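/- Let (x, K) be the solution of the backward Skorokhod problem BSP_l^r(s, a) on [0,T]: x_t = a + s_T − s_t + K_T − K_t, l(t, x_t) ≤ 0 ≤ r(t, x_t), K = K^r − K^l with K^r, K^l nondecreasing continuous starting at 0 and the flat-off conditions. Define the time-reversed data s̄_t = a + s_T − s_{T−t}, l̄(t,x) = l(T−t, x), r̄(t,x) = r(T−t, x), and the reversed processes x̄_t = x_{T−t}, K̄_t satisfying K_t = K̄_T − K̄_{T−t}. Then (x̄, K̄) is the unique solution of the forward Skorokhod problem SP_{l̄}^{r̄}(s̄). -/

import Mathlib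

open Set

/-- A solution `(x, K)` (with Jordan decomposition `K = Kr - Kl`) of the Skorokhod
problem `SP_l^r(s)` on `[0, T]` with two nonlinear time-dependent reflecting
constraints.  The flat-off conditions `∫ 1_{l(s,x_s)<0} dKl = ∫ 1_{r(s,x_s)>0} dKr = 0`
are expressed by requiring `Kl` (resp. `Kr`) to be constant on every subinterval where
the lower (resp. upper) constraint is strictly inactive. -/
structure SkorokhodSolution (T : ℝ) (l r : ℝ → ℝ → ℝ) (s : ℝ → ℝ)
    (x K Kr Kl : ℝ → ℝ) : Prop where
  cont_x : ContinuousOn x (Icc 0 T)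
  eqn : ∀ t ∈ Icc (0 : ℝ) T, x t = s t + K t
  lower : ∀ t ∈ Icc (0 : ℝ) T, l t (x t) ≤ 0
  upper : ∀ t ∈ Icc (0 : ℝ) T, 0 ≤ r t (x t)
  decomp : ∀ t ∈ Icc (0 : ℝ) T, K t = Kr t - Kl t
  Kr_zero : Kr 0 = 0
  Kl_zero : Kl 0 = 0
  cont_Kr : ContinuousOn Kr (Icc 0 T)
  cont_Kl : ContinuousOn Kl (Icc 0 T)
  mono_Kr : MonotoneOn Kr (Icc 0 T)
  mono_Kl : MonotoneOn Kl (Icc 0 T)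
  flat_l : ∀ a b : ℝ, 0 ≤ a → a ≤ b → b ≤ T →
    (∀ u ∈ Icc a b, l u (x u) < 0) → Kl b = Kl a
  flat_r : ∀ a b : ℝ, 0 ≤ a → a ≤ b → b ≤ T →
    (∀ u ∈ Icc a b, 0 < r u (x u)) → Kr b = Kr a

/-- Standing assumptions on the reflecting boundary functions `l ≤ r`:
continuity in `t`, strict monotonicity and bi-Lipschitz continuity in `x` with
constants `0 < c < C`, and uniform separation `inf (r - l) > 0`. -/
def LRAssumptions (T c C : ℝ) (l r : ℝ → ℝ → ℝ) : Prop :=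
  (∀ x : ℝ, ContinuousOn (fun t => l t x) (Icc 0 T)) ∧
  (∀ x : ℝ, ContinuousOn (fun t => r t x) (Icc 0 T)) ∧
  (∀ t ∈ Icc (0 : ℝ) T, StrictMono (l t)) ∧
  (∀ t ∈ Icc (0 : ℝ) T, StrictMono (r t)) ∧
  (∀ t ∈ Icc (0 : ℝ) T, ∀ x y : ℝ,
    c * |x - y| ≤ |l t x - l t y| ∧ |l t x - l t y| ≤ C * |x - y|) ∧
  (∀ t ∈ Icc (0 : ℝ) T, ∀ x y : ℝ,
    c * |x - y| ≤ |r t x - r t y| ∧ |r t x - r t y| ≤ C * |x - y|) ∧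
  (∃ ε : ℝ, 0 < ε ∧ ∀ t ∈ Icc (0 : ℝ) T, ∀ x : ℝ, ε ≤ r t x - l t x)

/-- A solution `(x, K)` (with `K = Kr - Kl`) of the backward Skorokhod problem
`BSP_l^r(s, a)` on `[0, T]`. -/
structure BackwardSkorokhodSolution (T : ℝ) (l r : ℝ → ℝ → ℝ) (s : ℝ → ℝ) (a : ℝ)
    (x K Kr Kl : ℝ → ℝ) : Prop where
  cont_x : ContinuousOn x (Icc 0 T)
  eqn : ∀ t ∈ Icc (0 : ℝ) T, x t = a + s T - s t + (K T - K t)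
  lower : ∀ t ∈ Icc (0 : ℝ) T, l t (x t) ≤ 0
  upper : ∀ t ∈ Icc (0 : ℝ) T, 0 ≤ r t (x t)
  decomp : ∀ t ∈ Icc (0 : ℝ) T, K t = Kr t - Kl t
  Kr_zero : Kr 0 = 0
  Kl_zero : Kl 0 = 0
  cont_Kr : ContinuousOn Kr (Icc 0 T)
  cont_Kl : ContinuousOn Kl (Icc 0 T)
  mono_Kr : MonotoneOn Kr (Icc 0 T)
  mono_Kl : MonotoneOn Kl (Icc 0 T)
  flat_l : ∀ a' b : ℝ, 0 ≤ a' → a' ≤ b → b ≤ T →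
    (∀ u ∈ Icc a' b, l u (x u) < 0) → Kl b = Kl a'
  flat_r : ∀ a' b : ℝ, 0 ≤ a' → a' ≤ b → b ≤ T →
    (∀ u ∈ Icc a' b, 0 < r u (x u)) → Kr b = Kr a'

/- Uniqueness is a comparison argument. While one solution lies strictly above another, strict
monotonicity of the constraints keeps the lower barrier of the smaller solution and the upper
barrier of the larger one inactive, so the remaining reflection terms can only bring the two
together. Their gap therefore cannot become positive on `[0, T]`, since it starts at zero. -/

section Excursion

variable {α β : Type*} [ConditionallyCompleteLinearOrder α] [TopologicalSpace α] [OrderTopology α]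
  [DenselyOrdered α] [LinearOrder β] [TopologicalSpace β] [OrderClosedTopology β]
  {f : α → β} {a b : α} {y : β}

theorem exists_eq_and_forall_Icc_le_of_continuousOn (hab : a ≤ b) (hf : ContinuousOn f (Icc a b))
    (hy : y ∈ Icc (f a) (f b)) : ∃ u ∈ Icc a b, f u = y ∧ ∀ v ∈ Icc u b, y ≤ f v := by
  have hcompact : IsCompact (Icc a b ∩ f ⁻¹' {y}) :=
    isCompact_Icc.of_isClosed_subset
      (hf.preimage_isClosed_of_isClosed isClosed_Icc isClosed_singleton) inter_subset_left
  obtain ⟨u, ⟨hu, hfu⟩, hlast⟩ := hcompact.exists_isGreatest (intermediate_value_Icc hab hf hy)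
  refine ⟨u, hu, hfu, fun v hv => ?_⟩
  by_contra! hfv
  have hav : a ≤ v := hu.1.trans hv.1
  obtain ⟨w, hw, hfw⟩ :=
    intermediate_value_Icc hv.2 (hf.mono (Icc_subset_Icc_left hav)) ⟨hfv.le, hy.2⟩
  have hwu : w ≤ u := hlast ⟨⟨hav.trans hw.1, hw.2⟩, hfw⟩
  have hwv : w = v := le_antisymm (hwu.trans hv.1) hw.1
  exact hfv.ne (hwv ▸ hfw)

theorem le_of_forall_excursion_le [DenselyOrdered β] (hab : a ≤ b) (hf : ContinuousOn f (Icc a b))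
    (hfa : f a ≤ y) (h : ∀ u ∈ Icc a b, (∀ v ∈ Icc u b, y < f v) → f b ≤ f u) : f b ≤ y := by
  by_contra! hyb
  obtain ⟨z, hyz, hzb⟩ := exists_between hyb
  obtain ⟨u, hu, rfl, hexc⟩ :=
    exists_eq_and_forall_Icc_le_of_continuousOn hab hf ⟨hfa.trans hyz.le, hzb.le⟩
  exact (h u hu fun v hv => hyz.trans_le (hexc v hv)).not_gt hzb

end Excursion

namespace SkorokhodSolution

variable {T : ℝ} {l r l' r' : ℝ → ℝ → ℝ} {s s' x K Kr Kl x' K' Kr' Kl' : ℝ → ℝ}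

theorem apply_zero (h : SkorokhodSolution T l r s x K Kr Kl) (hT : 0 ≤ T) : x 0 = s 0 := by
  have h0 : (0 : ℝ) ∈ Icc 0 T := left_mem_Icc.2 hT
  rw [h.eqn 0 h0, h.decomp 0 h0, h.Kr_zero, h.Kl_zero, sub_zero, add_zero]

theorem increment_eq (h : SkorokhodSolution T l r s x K Kr Kl) {u t : ℝ} (hu : u ∈ Icc 0 T)
    (ht : t ∈ Icc 0 T) : x t - x u = s t - s u + (Kr t - Kr u) - (Kl t - Kl u) := by
  rw [h.eqn t ht, h.eqn u hu, h.decomp t ht, h.decomp u hu]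
  ring

theorem gap_le_of_forall_lt (h : SkorokhodSolution T l r s x K Kr Kl)
    (h' : SkorokhodSolution T l' r' s' x' K' Kr' Kl')
    (hl : ∀ t ∈ Icc 0 T, StrictMono (l t)) (hr' : ∀ t ∈ Icc 0 T, StrictMono (r' t))
    (hll' : ∀ t ∈ Icc 0 T, l t ≤ l' t) (hrr' : ∀ t ∈ Icc 0 T, r t ≤ r' t)
    (hss' : AntitoneOn (s' - s) (Icc 0 T)) {u t : ℝ} (hu : 0 ≤ u) (hut : u ≤ t) (ht : t ≤ T)
    (hlt : ∀ v ∈ Icc u t, x v < x' v) : x' t - x t ≤ x' u - x u := by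
  have hIcc : Icc u t ⊆ Icc 0 T := Icc_subset_Icc hu ht
  have huT : u ∈ Icc 0 T := hIcc (left_mem_Icc.2 hut)
  have htT : t ∈ Icc 0 T := hIcc (right_mem_Icc.2 hut)
  have hKl : Kl t = Kl u := h.flat_l u t hu hut ht fun v hv => calc
    l v (x v) < l v (x' v) := hl v (hIcc hv) (hlt v hv)
    _ ≤ l' v (x' v) := hll' v (hIcc hv) _
    _ ≤ 0 := h'.lower v (hIcc hv)
  have hKr' : Kr' t = Kr' u := h'.flat_r u t hu hut ht fun v hv => calc
    0 ≤ r v (x v) := h.upper v (hIcc hv)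
    _ ≤ r' v (x v) := hrr' v (hIcc hv) _
    _ < r' v (x' v) := hr' v (hIcc hv) (hlt v hv)
  have hKr : Kr u ≤ Kr t := h.mono_Kr huT htT hut
  have hKl' : Kl' u ≤ Kl' t := h'.mono_Kl huT htT hut
  have hs : s' t - s t ≤ s' u - s u := hss' huT htT hut
  linarith [h.increment_eq huT htT, h'.increment_eq huT htT]

theorem comparison (h : SkorokhodSolution T l r s x K Kr Kl)
    (h' : SkorokhodSolution T l' r' s' x' K' Kr' Kl')
    (hl : ∀ t ∈ Icc 0 T, StrictMono (l t)) (hr' : ∀ t ∈ Icc 0 T, StrictMono (r' t))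
    (hll' : ∀ t ∈ Icc 0 T, l t ≤ l' t) (hrr' : ∀ t ∈ Icc 0 T, r t ≤ r' t)
    (hss' : AntitoneOn (s' - s) (Icc 0 T)) (hs0 : s' 0 ≤ s 0) {t : ℝ} (ht : t ∈ Icc 0 T) :
    x' t ≤ x t := by
  have hT : 0 ≤ T := ht.1.trans ht.2
  have hcont : ContinuousOn (x' - x) (Icc 0 t) :=
    (h'.cont_x.sub h.cont_x).mono (Icc_subset_Icc_right ht.2)
  have hinit : (x' - x) 0 ≤ 0 := by
    simpa only [Pi.sub_apply, h.apply_zero hT, h'.apply_zero hT, sub_nonpos] using hs0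
  refine sub_nonpos.1 (le_of_forall_excursion_le (f := x' - x) ht.1 hcont hinit fun u hu hexc => ?_)
  exact h.gap_le_of_forall_lt h' hl hr' hll' hrr' hss' hu.1 hu.2 ht.2
    fun v hv => sub_pos.1 (hexc v hv)

theorem unique (h : SkorokhodSolution T l r s x K Kr Kl)
    (h' : SkorokhodSolution T l r s x' K' Kr' Kl') (hl : ∀ t ∈ Icc 0 T, StrictMono (l t))
    (hr : ∀ t ∈ Icc 0 T, StrictMono (r t)) {t : ℝ} (ht : t ∈ Icc 0 T) :
    x' t = x t ∧ K' t = K t := by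
  have hs : AntitoneOn (s - s) (Icc 0 T) := by
    rw [sub_self]
    exact antitoneOn_const
  have hx : x' t = x t := le_antisymm
    (h.comparison h' hl hr (fun _ _ => le_rfl) (fun _ _ => le_rfl) hs le_rfl ht)
    (h'.comparison h hl hr (fun _ _ => le_rfl) (fun _ _ => le_rfl) hs le_rfl ht)
  exact ⟨hx, by linarith [h.eqn t ht, h'.eqn t ht]⟩

end SkorokhodSolution

section TimeReversal

variable {G H : Type*} [AddCommGroup G] [PartialOrder G] [IsOrderedAddMonoid G] {T : G}

theorem continuousOn_comp_const_sub [TopologicalSpace G] [ContinuousSub G] [TopologicalSpace H]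
    {f : G → H} (hf : ContinuousOn f (Icc 0 T)) :
    ContinuousOn (fun t => f (T - t)) (Icc 0 T) :=
  hf.comp (continuous_const.sub continuous_id).continuousOn
    fun _ => sub_mem_Icc_zero_iff_right.2

theorem monotoneOn_sub_comp_const_sub [AddCommGroup H] [PartialOrder H] [IsOrderedAddMonoid H]
    {k : G → H} (hk : MonotoneOn k (Icc 0 T)) :
    MonotoneOn (fun t => k T - k (T - t)) (Icc 0 T) := fun _ hu _ hv huv =>
  sub_le_sub_left (hk (sub_mem_Icc_zero_iff_right.2 hv) (sub_mem_Icc_zero_iff_right.2 hu)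
    (sub_le_sub_left huv T)) (k T)

/-- The flat-off condition for a regulator `k` on `[0, T]`, in the form of the fields `flat_l` and
`flat_r`: `k` does not vary over any subinterval on which the constraint is inactive, inactivity
being expressed by the predicate `P`. -/
def FlatOff {G H : Type*} [Zero G] [Preorder G] (T : G) (P : G → Prop) (k : G → H) : Prop :=
  ∀ a b, 0 ≤ a → a ≤ b → b ≤ T → (∀ u ∈ Icc a b, P u) → k b = k a

theorem FlatOff.reverse [Sub H] {P : G → Prop} {k : G → H} (h : FlatOff T P k) :
    FlatOff T (fun t => P (T - t)) (fun t => k T - k (T - t)) := by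
  intro a b ha hab hb hP
  have hk : k (T - a) = k (T - b) :=
    h (T - b) (T - a) (sub_nonneg.2 hb) (sub_le_sub_left hab T) (sub_le_self T ha) fun u hu => by
      simpa only [sub_sub_cancel] using hP (T - u) ⟨le_sub_comm.1 hu.2, sub_le_comm.1 hu.1⟩
  simp only [hk]

theorem BackwardSkorokhodSolution.reverse {T a : ℝ} {l r : ℝ → ℝ → ℝ} {s x K Kr Kl : ℝ → ℝ}
    (h : BackwardSkorokhodSolution T l r s a x K Kr Kl) :
    SkorokhodSolution T (fun t y => l (T - t) y) (fun t y => r (T - t) y)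
      (fun t => a + s T - s (T - t)) (fun t => x (T - t))
      (fun t => K T - K (T - t)) (fun t => Kr T - Kr (T - t))
      (fun t => Kl T - Kl (T - t)) where
  cont_x := continuousOn_comp_const_sub h.cont_x
  eqn _ ht := h.eqn _ (sub_mem_Icc_zero_iff_right.2 ht)
  lower _ ht := h.lower _ (sub_mem_Icc_zero_iff_right.2 ht)
  upper _ ht := h.upper _ (sub_mem_Icc_zero_iff_right.2 ht)
  decomp t ht := by
    rw [h.decomp T (right_mem_Icc.2 (ht.1.trans ht.2)),
      h.decomp (T - t) (sub_mem_Icc_zero_iff_right.2 ht), sub_sub_sub_comm]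
  Kr_zero := by rw [sub_zero, sub_self]
  Kl_zero := by rw [sub_zero, sub_self]
  cont_Kr := continuousOn_const.sub (continuousOn_comp_const_sub h.cont_Kr)
  cont_Kl := continuousOn_const.sub (continuousOn_comp_const_sub h.cont_Kl)
  mono_Kr := monotoneOn_sub_comp_const_sub h.mono_Kr
  mono_Kl := monotoneOn_sub_comp_const_sub h.mono_Kl
  flat_l := FlatOff.reverse (P := fun t => l t (x t) < 0) h.flat_l
  flat_r := FlatOff.reverse (P := fun t => 0 < r t (x t)) h.flat_r

end TimeReversal

theorem stmt_7_general {T a : ℝ} {l r : ℝ → ℝ → ℝ} {s x K Kr Kl : ℝ → ℝ}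
    (hl : ∀ t ∈ Icc 0 T, StrictMono (l t)) (hr : ∀ t ∈ Icc 0 T, StrictMono (r t))
    (hsol : BackwardSkorokhodSolution T l r s a x K Kr Kl) :
    SkorokhodSolution T (fun t y => l (T - t) y) (fun t y => r (T - t) y)
      (fun t => a + s T - s (T - t)) (fun t => x (T - t))
      (fun t => K T - K (T - t)) (fun t => Kr T - Kr (T - t))
      (fun t => Kl T - Kl (T - t)) ∧
    ∀ x' K' Kr' Kl' : ℝ → ℝ,
      SkorokhodSolution T (fun t y => l (T - t) y) (fun t y => r (T - t) y)
        (fun t => a + s T - s (T - t)) x' K' Kr' Kl' →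
      ∀ t ∈ Icc (0 : ℝ) T, x' t = x (T - t) ∧ K' t = K T - K (T - t) :=
  ⟨hsol.reverse, fun _ _ _ _ h' _ ht => hsol.reverse.unique h'
    (fun _ hv => hl _ (sub_mem_Icc_zero_iff_right.2 hv))
    (fun _ hv => hr _ (sub_mem_Icc_zero_iff_right.2 hv)) ht⟩

/-- Time reversal identifies the backward Skorokhod problem `BSP_l^r(s, a)` with the
forward Skorokhod problem `SP_{l̄}^{r̄}(s̄)` for the reversed data
`s̄_t = a + s_T − s_{T−t}`, `l̄(t,·) = l(T−t,·)`, `r̄(t,·) = r(T−t,·)`: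
the reversed processes `x̄_t = x_{T−t}`, `K̄_t = K_T − K_{T−t}` solve `SP_{l̄}^{r̄}(s̄)`,
and this forward problem has no other solution. -/
theorem stmt_7 (T c C a : ℝ) (hT : 0 ≤ T) (hc : 0 < c) (hcC : c < C)
    (l r : ℝ → ℝ → ℝ) (s : ℝ → ℝ) (hs : ContinuousOn s (Icc 0 T))
    (hlr : LRAssumptions T c C l r)
    (hla : l T a ≤ 0) (hra : 0 ≤ r T a)
    (x K Kr Kl : ℝ → ℝ)
    (hsol : BackwardSkorokhodSolution T l r s a x K Kr Kl) :
    SkorokhodSolution T (fun t y => l (T - t) y) (fun t y => r (T - t) y)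
      (fun t => a + s T - s (T - t)) (fun t => x (T - t))
      (fun t => K T - K (T - t)) (fun t => Kr T - Kr (T - t))
      (fun t => Kl T - Kl (T - t)) ∧
    ∀ x' K' Kr' Kl' : ℝ → ℝ,
      SkorokhodSolution T (fun t y => l (T - t) y) (fun t y => r (T - t) y)
        (fun t => a + s T - s (T - t)) x' K' Kr' Kl' →
      ∀ t ∈ Icc (0 : ℝ) T, x' t = x (T - t) ∧ K' t = K T - K (T - t) := by
  obtain ⟨-, -, hl, hr, -⟩ := hlr
  exact stmt_7_general hl hr hsol
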